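/- Every strong groupoid is u-normal: if • is a strong groupoid on X, then both • = U(•) ⋄ A(•) and • = A(•) ⋄ U(•) hold. -/

import Mathlib

/-- The groupoid product `⋄` on `Bin(X)`: `(f ⋄ g) x y = g (f x y) (f y x)`. -/
def binProd {X : Type*} (f g : X → X → X) : X → X → X :=
  fun x y => g (f x y) (f y x)

/-- The signature-factor `U(•)`: `x ∗ y = x` if `x = y`, else `x • y`. -/
def signatureFactor {X : Type*} [DecidableEq X] (f : X → X → X) : X → X → X :=
  fun x y => if x = y then x else f x y

/-- The similar-factor `A(•)`: `x ∘ y = x • x` if `x = y`, else `x`. -/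
def similarFactor {X : Type*} [DecidableEq X] (f : X → X → X) : X → X → X :=
  fun x y => if x = y then f x x else x

/-!
As `A(•)` is the left projection off the diagonal, `A(•) ⋄ U(•) = •` for every groupoid.
In the other order, `U(•) ⋄ A(•)` sends distinct `x`, `y` to the value of `A(•)` at
`(x • y, y • x)`: this is `x • y` unless `x` and `y` commute, in which case it is the square of
`x • y`. So the only obstruction to u-normality is a non-idempotent product of two distinct
commuting elements, and a strong groupoid has no two distinct commuting elements.
-/

section Factors

variable {X : Type*}

theorem binProd_apply (f g : X → X → X) (x y : X) : binProd f g x y = g (f x y) (f y x) := rfl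

variable [DecidableEq X]

theorem signatureFactor_self (f : X → X → X) (x : X) : signatureFactor f x x = x := if_pos rfl

theorem signatureFactor_of_ne (f : X → X → X) {x y : X} (hxy : x ≠ y) :
    signatureFactor f x y = f x y := if_neg hxy

theorem similarFactor_self (f : X → X → X) (x : X) : similarFactor f x x = f x x := if_pos rfl

theorem similarFactor_of_ne (f : X → X → X) {x y : X} (hxy : x ≠ y) :
    similarFactor f x y = x := if_neg hxy

theorem binProd_similarFactor_signatureFactor (f : X → X → X) :
    binProd (similarFactor f) (signatureFactor f) = f := by
  funext x y
  rw [binProd_apply]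
  obtain rfl | hxy := eq_or_ne x y
  · rw [similarFactor_self, signatureFactor_self]
  · rw [similarFactor_of_ne f hxy, similarFactor_of_ne f hxy.symm, signatureFactor_of_ne f hxy]

theorem similarFactor_eq_left_iff (f : X → X → X) {a b : X} :
    similarFactor f a b = a ↔ (a = b → f a a = a) := by
  obtain rfl | hab := eq_or_ne a b
  · simp only [similarFactor_self, forall_const]
  · simp only [similarFactor_of_ne f hab, hab, false_imp_iff]

theorem binProd_signatureFactor_similarFactor_self (f : X → X → X) (x : X) :
    binProd (signatureFactor f) (similarFactor f) x x = f x x := by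
  rw [binProd_apply, signatureFactor_self, similarFactor_self]

theorem binProd_signatureFactor_similarFactor_of_ne (f : X → X → X) {x y : X} (hxy : x ≠ y) :
    binProd (signatureFactor f) (similarFactor f) x y = similarFactor f (f x y) (f y x) := by
  rw [binProd_apply, signatureFactor_of_ne f hxy, signatureFactor_of_ne f hxy.symm]

theorem binProd_signatureFactor_similarFactor_eq_iff (f : X → X → X) :
    binProd (signatureFactor f) (similarFactor f) = f ↔
      ∀ x y, x ≠ y → f x y = f y x → f (f x y) (f x y) = f x y := by
  simp only [funext_iff]
  refine forall₂_congr fun x y => ?_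
  obtain rfl | hxy := eq_or_ne x y
  · simp only [binProd_signatureFactor_similarFactor_self, ne_eq, not_true_eq_false, false_imp_iff]
  · simp only [binProd_signatureFactor_similarFactor_of_ne f hxy, similarFactor_eq_left_iff, hxy,
      ne_eq, not_false_eq_true, true_imp_iff]

end Factors

theorem stmt_7_general {X : Type*} [DecidableEq X] (f : X → X → X) :
    (binProd (signatureFactor f) (similarFactor f) = f ∧
      binProd (similarFactor f) (signatureFactor f) = f) ↔
      ∀ x y, x ≠ y → f x y = f y x → f (f x y) (f x y) = f x y :=
  (and_iff_left (binProd_similarFactor_signatureFactor f)).trans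
    (binProd_signatureFactor_similarFactor_eq_iff f)

theorem stmt_7 {X : Type*} [DecidableEq X] (f : X → X → X)
    (hstrong : ∀ x y : X, f x y = f y x → x = y) :
    binProd (signatureFactor f) (similarFactor f) = f ∧
      binProd (similarFactor f) (signatureFactor f) = f :=
  (stmt_7_general f).2 fun x y hxy hcomm => absurd (hstrong x y hcomm) hxy
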